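/- arXiv:cs/0207060 — 2 statements merged into one kernel-verified Lean document; each statement's English description precedes it below -/
import Mathlib

section
/- For any ordered logic program (Π,<), the operator A_{(Π,<)} = C_{(Π,<)}∘C_{(Π,<)} is monotonic: for all sets of literals X₁, X₂, if X₁ ⊆ X₂ then A_{(Π,<)}(X₁) ⊆ A_{(Π,<)}(X₂); consequently A_{(Π,<)} possesses a least fixpoint and a greatest fixpoint. -/
open scoped Classical

/-- A literal: an atom `A` or its classical negation `¬A`. -/
inductive Lit (α : Type) : Type
  | pos : α → Lit α
  | neg : α → Lit α

/-- A rule with a head literal and finite positive and negative bodies. -/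
structure Rule (α : Type) where
  head : Lit α
  pbody : Finset (Lit α)
  nbody : Finset (Lit α)

/-- A program is a set of rules (finiteness is stated as a hypothesis). -/
abbrev Program (α : Type) := Set (Rule α)

/-- `X` is consistent if it contains no complementary pair. -/
def Consistent {α : Type} (X : Set (Lit α)) : Prop :=
  ¬ ∃ A : α, Lit.pos A ∈ X ∧ Lit.neg A ∈ X

/-- `X` is logically closed if it is consistent or equals the set of all literals. -/
def LogClosed {α : Type} (X : Set (Lit α)) : Prop :=
  Consistent X ∨ X = Set.univ

/-- `X` is closed under (basic) program `P`. -/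
def ClosedUnder {α : Type} (P : Program α) (X : Set (Lit α)) : Prop :=
  ∀ r ∈ P, ↑r.pbody ⊆ X → r.head ∈ X

/-- `Cn P` : the smallest logically closed set closed under basic program `P`. -/
def Cn {α : Type} (P : Program α) : Set (Lit α) :=
  ⋂₀ {X | LogClosed X ∧ ClosedUnder P X}

/-- The reduct of `P` relative to `X`. -/
def reduct {α : Type} (P : Program α) (X : Set (Lit α)) : Program α :=
  {s | ∃ r ∈ P, (↑r.nbody ∩ X = (∅ : Set (Lit α))) ∧ s = ⟨r.head, r.pbody, ∅⟩}

/-- A program is basic if all its rules have empty negative body. -/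
def IsBasic {α : Type} (P : Program α) : Prop := ∀ r ∈ P, r.nbody = ∅

/-- `C_Π(X) = Cn(Π^X)`. -/
noncomputable def Cop {α : Type} (P : Program α) (X : Set (Lit α)) : Set (Lit α) :=
  Cn (reduct P X)

/-- `A_Π(X) = C_Π(C_Π(X))`. -/
noncomputable def Aop {α : Type} (P : Program α) (X : Set (Lit α)) : Set (Lit α) :=
  Cop P (Cop P X)

/-- `X` is an answer set of `P` iff `Cn(P^X) = X`. -/
def AnswerSet {α : Type} (P : Program α) (X : Set (Lit α)) : Prop :=
  Cn (reduct P X) = X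

/-- Immediate consequence operator for a basic program. -/
noncomputable def T {α : Type} (P : Program α) (X : Set (Lit α)) : Set (Lit α) :=
  if Consistent X then {L | ∃ r ∈ P, ↑r.pbody ⊆ X ∧ L = r.head} else Set.univ

/-- `r` is active wrt `(X, Y)`. -/
def Active {α : Type} (r : Rule α) (X Y : Set (Lit α)) : Prop :=
  ↑r.pbody ⊆ X ∧ ↑r.nbody ∩ Y = (∅ : Set (Lit α))

/-- Extended immediate consequence operator `T_{Π,Y}(X)`. -/
noncomputable def TE {α : Type} (P : Program α) (Y X : Set (Lit α)) : Set (Lit α) :=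
  if Consistent X then {L | ∃ r ∈ P, Active r X Y ∧ L = r.head} else Set.univ

/-- Preference-sensitive operator `T_{(Π,<),Y}(X)` (Definition 1). -/
noncomputable def TP {α : Type} (P : Program α) (lt : Rule α → Rule α → Prop)
    (Y X : Set (Lit α)) : Set (Lit α) :=
  if Consistent X then
    {L | ∃ r ∈ P, Active r X Y ∧
      (¬ ∃ r' ∈ P, lt r r' ∧ Active r' Y X ∧ r'.head ∉ X) ∧ L = r.head}
  else Set.univ

/-- `C_{(Π,<)}(X)` (Definition 2). -/
noncomputable def CP {α : Type} (P : Program α) (lt : Rule α → Rule α → Prop)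
    (X : Set (Lit α)) : Set (Lit α) :=
  ⋃ i : ℕ, (TP P lt X)^[i] ∅

/-- `A_{(Π,<)}(X) = C_{(Π,<)}(C_{(Π,<)}(X))`. -/
noncomputable def AP {α : Type} (P : Program α) (lt : Rule α → Rule α → Prop)
    (X : Set (Lit α)) : Set (Lit α) :=
  CP P lt (CP P lt X)

/-- The set `D^r_{(X,Y)}` of removable literals. -/
def D {α : Type} (P : Program α) (lt : Rule α → Rule α → Prop) (r : Rule α)
    (X Y : Set (Lit α)) : Set (Lit α) :=
  {L | ∀ r' ∈ P, r'.head = L → ↑r'.pbody ⊆ Y →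
      lt r' r ∧ ({r.head} ∪ X) ∩ ↑r'.nbody ≠ (∅ : Set (Lit α))}

/-- `T°_{(Π,<),Y}(X)` (Definition 3). -/
noncomputable def TN {α : Type} (P : Program α) (lt : Rule α → Rule α → Prop)
    (Y X : Set (Lit α)) : Set (Lit α) :=
  if Consistent X then
    {L | ∃ r ∈ P, Active r X (Y \ D P lt r X Y) ∧ L = r.head}
  else Set.univ

/-- `C°_{(Π,<)}(X)` (Definition 4). -/
noncomputable def CN {α : Type} (P : Program α) (lt : Rule α → Rule α → Prop)
    (X : Set (Lit α)) : Set (Lit α) :=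
  ⋃ i : ℕ, (TN P lt X)^[i] ∅

/-- `A°_{(Π,<)}(X) = C°_{(Π,<)}(C_Π(X))`. -/
noncomputable def AN {α : Type} (P : Program α) (lt : Rule α → Rule α → Prop)
    (X : Set (Lit α)) : Set (Lit α) :=
  CN P lt (Cop P X)

theorem TP_mono_anti {α : Type} (P : Program α) (lt : Rule α → Rule α → Prop)
    {X X' Y Y' : Set (Lit α)} (hX : X ⊆ X') (hY : Y' ⊆ Y) :
    TP P lt Y X ⊆ TP P lt Y' X' := by
  intro L hL
  by_cases h' : Consistent X'
  · have h : Consistent X := fun ⟨A, h1, h2⟩ => h' ⟨A, hX h1, hX h2⟩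
    unfold TP at hL ⊢
    rw [if_pos h] at hL
    rw [if_pos h']
    obtain ⟨r, hr, ⟨hp, hn⟩, hb, rfl⟩ := hL
    refine ⟨r, hr, ⟨hp.trans hX, ?_⟩, ?_, rfl⟩
    · exact Set.subset_empty_iff.1 ((Set.inter_subset_inter_right _ hY).trans hn.subset)
    · rintro ⟨r', hr', hlt, ⟨hp', hn'⟩, hh⟩
      exact hb ⟨r', hr', hlt, ⟨hp'.trans hY, Set.subset_empty_iff.1
        ((Set.inter_subset_inter_right _ hX).trans hn'.subset)⟩, fun h => hh (hX h)⟩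
  · unfold TP
    rw [if_neg h']
    trivial

theorem CP_anti {α : Type} (P : Program α) (lt : Rule α → Rule α → Prop)
    {Y Y' : Set (Lit α)} (hY : Y' ⊆ Y) : CP P lt Y ⊆ CP P lt Y' := by
  refine Set.iUnion_mono fun i => ?_
  induction i with
  | zero => exact subset_rfl
  | succ n ih =>
    rw [Function.iterate_succ_apply', Function.iterate_succ_apply']
    exact TP_mono_anti P lt ih hY

/-- `A_{(Π,<)} = C_{(Π,<)} ∘ C_{(Π,<)}` is monotonic, hence has a
least and a greatest fixpoint. -/
theorem AP_monotone_lfp_gfp {α : Type} (P : Program α) (hfin : P.Finite)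
    (lt : Rule α → Rule α → Prop)
    (hirr : ∀ r, ¬ lt r r) (htrans : ∀ r₁ r₂ r₃, lt r₁ r₂ → lt r₂ r₃ → lt r₁ r₃) :
    (∀ X₁ X₂ : Set (Lit α), X₁ ⊆ X₂ → AP P lt X₁ ⊆ AP P lt X₂) ∧
    (∃ L : Set (Lit α), AP P lt L = L ∧ ∀ Z, AP P lt Z = Z → L ⊆ Z) ∧
    (∃ G : Set (Lit α), AP P lt G = G ∧ ∀ Z, AP P lt Z = Z → Z ⊆ G) := by
  have hm : ∀ X₁ X₂ : Set (Lit α), X₁ ⊆ X₂ → AP P lt X₁ ⊆ AP P lt X₂ :=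
    fun X₁ X₂ h => CP_anti P lt (CP_anti P lt h)
  let f : Set (Lit α) →o Set (Lit α) := ⟨AP P lt, fun X₁ X₂ h => hm X₁ X₂ h⟩
  refine ⟨hm, ⟨OrderHom.lfp f, f.map_lfp, fun Z hZ => ?_⟩,
    ⟨OrderHom.gfp f, f.map_gfp, fun Z hZ => ?_⟩⟩
  · exact OrderHom.lfp_le f (le_of_eq hZ)
  · exact OrderHom.le_gfp f (le_of_eq hZ.symm)
end

section
/- Let (X,Y) be the preferred well-founded model of an ordered logic program (Π,<) and let (X',Y') be the well-founded model of Π. Then X' ⊆ X and Y' ⊆ Y; that is, lfp(A_Π) ⊆ lfp(A°_{(Π,<)}) and Lit∖C_Π(lfp(A_Π)) ⊆ Lit∖C_Π(lfp(A°_{(Π,<)})). -/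
open scoped Classical

theorem Cop_anti {α : Type} (P : Program α) {X Y : Set (Lit α)} (h : X ⊆ Y) :
    Cop P Y ⊆ Cop P X := by
  intro L hL Z hZ
  refine hL Z ⟨hZ.1, ?_⟩
  rintro s ⟨r, hr, hn, rfl⟩ hp
  refine hZ.2 _ ⟨r, hr, ?_, rfl⟩ hp
  exact Set.subset_eq_empty (Set.inter_subset_inter_right _ h) hn

theorem TN_mono {α : Type} (P : Program α) (lt : Rule α → Rule α → Prop)
    (Y : Set (Lit α)) : Monotone (TN P lt Y) := by
  intro X X' h
  by_cases h' : Consistent X'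
  · have hc : Consistent X := fun ⟨A, h1, h2⟩ => h' ⟨A, h h1, h h2⟩
    unfold TN
    rw [if_pos hc, if_pos h']
    rintro L ⟨r, hr, ⟨hp, hn⟩, rfl⟩
    refine ⟨r, hr, ⟨hp.trans h, ?_⟩, rfl⟩
    refine Set.subset_eq_empty ?_ hn
    rintro l ⟨hl, hlY, hlD⟩
    refine ⟨hl, hlY, fun hd => hlD ?_⟩
    intro r' hr' he hb
    obtain ⟨h1, h2⟩ := hd r' hr' he hb
    refine ⟨h1, fun h3 => h2 ?_⟩
    exact Set.subset_eq_empty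
      (Set.inter_subset_inter_left _ (Set.union_subset_union_right _ h)) h3
  · unfold TN
    rw [if_neg h']
    exact Set.subset_univ _

theorem TN_iter_mono {α : Type} (P : Program α) (lt : Rule α → Rule α → Prop)
    (Y : Set (Lit α)) : Monotone (fun i : ℕ => (TN P lt Y)^[i] ∅) :=
  (TN_mono P lt Y).monotone_iterate_of_le_map (Set.empty_subset _)

theorem CN_univ {α : Type} (P : Program α) (lt : Rule α → Rule α → Prop)
    (Y : Set (Lit α)) (i : ℕ) (h : ¬ Consistent ((TN P lt Y)^[i] ∅)) :
    CN P lt Y = Set.univ := by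
  refine Set.eq_univ_of_forall fun L => Set.mem_iUnion.2 ⟨i + 1, ?_⟩
  rw [Function.iterate_succ_apply']
  unfold TN at h ⊢
  rw [if_neg h]
  trivial

theorem Cop_subset_CN {α : Type} (P : Program α) (lt : Rule α → Rule α → Prop)
    (Y : Set (Lit α)) : Cop P Y ⊆ CN P lt Y := by
  intro L hL
  refine hL _ ⟨?_, ?_⟩
  · by_cases hc : Consistent (CN P lt Y)
    · exact Or.inl hc
    · right
      obtain ⟨A, h1, h2⟩ := not_not.1 hc
      obtain ⟨i, hi⟩ := Set.mem_iUnion.1 h1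
      obtain ⟨j, hj⟩ := Set.mem_iUnion.1 h2
      exact CN_univ P lt Y (max i j) fun hcon => hcon
        ⟨A, TN_iter_mono P lt Y (le_max_left i j) hi,
          TN_iter_mono P lt Y (le_max_right i j) hj⟩
  · rintro s ⟨r, hr, hn, rfl⟩ hp
    obtain ⟨i, hi⟩ := (TN_iter_mono P lt Y).directed_le.exists_mem_subset_of_finset_subset_biUnion hp
    by_cases hc : Consistent ((TN P lt Y)^[i] ∅)
    · refine Set.mem_iUnion.2 ⟨i + 1, ?_⟩
      rw [Function.iterate_succ_apply']
      have : ∀ Z, Consistent Z → ↑r.pbody ⊆ Z → r.head ∈ TN P lt Y Z := by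
        intro Z hZ hb
        unfold TN
        rw [if_pos hZ]
        exact ⟨r, hr, ⟨hb, Set.subset_eq_empty
          (Set.inter_subset_inter_right _ Set.diff_subset) hn⟩, rfl⟩
      exact this _ hc hi
    · rw [CN_univ P lt Y i hc]
      trivial

/-- Theorem 3.1: the standard well-founded model is contained
componentwise in the preferred well-founded model. -/
theorem wfm_subset_preferred_wfm {α : Type} (P : Program α) (hfin : P.Finite)
    (lt : Rule α → Rule α → Prop)
    (hirr : ∀ r, ¬ lt r r) (htrans : ∀ r₁ r₂ r₃, lt r₁ r₂ → lt r₂ r₃ → lt r₁ r₃)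
    (X W : Set (Lit α))
    (hX : AN P lt X = X ∧ ∀ Z, AN P lt Z = Z → X ⊆ Z)
    (hW : Aop P W = W ∧ ∀ Z, Aop P Z = Z → W ⊆ Z) :
    W ⊆ X ∧ (Set.univ \ Cop P W) ⊆ (Set.univ \ Cop P X) := by
  have key : W ⊆ X := by
    let f : Set (Lit α) →o Set (Lit α) :=
      ⟨Aop P, fun _ _ h => Cop_anti P (Cop_anti P h)⟩
    have h1 : W ⊆ OrderHom.lfp f := hW.2 _ (OrderHom.map_lfp f)
    have h2 : OrderHom.lfp f ≤ X := by
      apply OrderHom.lfp_le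
      have h3 := Cop_subset_CN P lt (Cop P X)
      have h4 : CN P lt (Cop P X) = X := hX.1
      rw [h4] at h3
      exact h3
    exact h1.trans h2
  exact ⟨key, Set.diff_subset_diff_right (Cop_anti P key)⟩
end
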